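/- Let A be a matrix-valued function of a real parameter h, analytic in h and hermitian for all real h, on a finite-dimensional complex inner product space. Then the eigenvalues of A(h) can be chosen to be real-analytic functions of h. -/

import Mathlib

/-!
It suffices to treat an analytic family of real-rooted monic polynomials `p h` (Rellich), by
induction on the degree `n`. Translating the variable, assume the coefficient of `X ^ (n - 1)`
vanishes, so that `-2` times the coefficient of `X ^ (n - 2)` is the sum of the squares of the
roots. If this sum vanishes identically, so do all roots. Otherwise, being analytic and
nonnegative, it vanishes to some even order `2 * m` at `h₀`; hence all roots are
`O((h - h₀) ^ m)`, and dividing them by `(h - h₀) ^ m` gives another analytic family,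
real-rooted also at `h₀` by passing to the limit. At `h₀` its roots sum to zero and are not all
zero, so they are not all equal: the polynomial is a product of two coprime factors of smaller
degree, and the inverse function theorem extends this factorization analytically to a
neighbourhood of `h₀`.
-/

open Filter Topology Polynomial

namespace Rellich

section AnalyticCoeff

variable {𝕜 E R : Type*} [NontriviallyNormedField 𝕜] [NormedAddCommGroup E] [NormedSpace 𝕜 E]
  [NormedCommRing R] [NormedAlgebra 𝕜 R] {p : E → R[X]} {z : E}

variable (𝕜) in
/-- The family `p` of polynomials depends analytically on its parameter at `z`. As `R[X]` carries no
norm, this is expressed coefficient by coefficient. -/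
def AnalyticCoeffAt (p : E → R[X]) (z : E) : Prop :=
  ∀ k, AnalyticAt 𝕜 (fun h => (p h).coeff k) z

lemma AnalyticCoeffAt.taylor {s : E → R} {n : ℕ} (hp : AnalyticCoeffAt 𝕜 p z)
    (hdeg : ∀ᶠ h in 𝓝 z, (p h).natDegree ≤ n) (hs : AnalyticAt 𝕜 s z) :
    AnalyticCoeffAt 𝕜 (fun h => taylor (s h) (p h)) z := by
  intro k
  have hsum : AnalyticAt 𝕜
      (fun h => ∑ i ∈ Finset.range (n + 1), ((i + k).choose k * (p h).coeff (i + k)) * s h ^ i) z :=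
    Finset.analyticAt_fun_sum _ fun i _ => (analyticAt_const.mul (hp _)).mul (hs.pow i)
  refine hsum.congr (hdeg.mono fun h hh => ?_)
  have hlt : (hasseDeriv k (p h)).natDegree < n + 1 := by
    have := natDegree_hasseDeriv_le (p h) k
    omega
  simp only [taylor_coeff, eval_eq_sum_range' hlt, hasseDeriv_coeff]

lemma AnalyticCoeffAt.charpoly {ι : Type*} [Fintype ι] [DecidableEq ι] {A : E → Matrix ι ι R}
    (hA : ∀ i j, AnalyticAt 𝕜 (fun h => A h i j) z) :
    AnalyticCoeffAt 𝕜 (fun h => (A h).charpoly) z := by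
  intro k
  have huniv := AnalyticAt.aeval_mvPolynomial (𝕜 := 𝕜) (f := fun h (ij : ι × ι) => A h ij.1 ij.2)
    (fun ij => hA ij.1 ij.2) ((Matrix.charpoly.univ ℤ ι).coeff k)
  exact huniv.congr (.of_forall fun h =>
    Matrix.charpoly.univ_coeff_eval₂Hom ι (algebraMap ℤ R) (fun ij => A h ij.1 ij.2) k)

end AnalyticCoeff

section MonicOfFn

variable {R : Type*} [CommRing R] [DecidableEq R] {n : ℕ}

/-- The monic polynomial of degree `n` whose lower coefficients are the entries of `a`. It
parametrizes monic polynomials by a normed space. -/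
noncomputable def monicOfFn (n : ℕ) (a : Fin n → R) : R[X] := X ^ n + ofFn n a

lemma coeff_monicOfFn_of_lt (a : Fin n → R) (i : Fin n) : (monicOfFn n a).coeff i = a i := by
  simp [monicOfFn, coeff_X_pow, i.2.ne]

lemma isMonicOfDegree_monicOfFn [Nontrivial R] (a : Fin n → R) :
    IsMonicOfDegree (monicOfFn n a) n := by
  have hdeg := ofFn_degree_lt a
  refine (isMonicOfDegree_iff ..).2 ⟨natDegree_le_of_degree_le ?_, by simp [monicOfFn]⟩
  exact (degree_add_le _ _).trans (max_le (degree_X_pow_le n) hdeg.le)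

lemma degree_monicOfFn [Nontrivial R] (a : Fin n → R) : (monicOfFn n a).degree = n := by
  rw [degree_eq_natDegree (isMonicOfDegree_monicOfFn a).ne_zero,
    (isMonicOfDegree_monicOfFn a).natDegree_eq]

lemma eq_monicOfFn_toFn [Nontrivial R] {p : R[X]} (hp : IsMonicOfDegree p n) :
    p = monicOfFn n (toFn n p) := by
  ext i
  rcases lt_or_ge i n with hi | hi
  · exact (coeff_monicOfFn_of_lt (toFn n p) ⟨i, hi⟩).symm
  · exact hp.coeff_eq (isMonicOfDegree_monicOfFn _) hi

end MonicOfFn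

section Hensel

variable {𝕜 E F : Type*} [NontriviallyNormedField 𝕜] [NormedAddCommGroup E] [NormedSpace 𝕜 E]
  [NormedAddCommGroup F] [NormedSpace 𝕜 F]

lemma exists_analyticAt_rightInverse [CompleteSpace E] {f : E → F} {a : E}
    {f' : E ≃L[𝕜] F} (hf : AnalyticAt 𝕜 f a) (hf' : HasFDerivAt f (f' : E →L[𝕜] F) a) :
    ∃ g : F → E, AnalyticAt 𝕜 g (f a) ∧ ∀ᶠ y in 𝓝 (f a), f (g y) = y := by
  have hstrict : HasStrictFDerivAt f (f' : E →L[𝕜] F) a := hf'.fderiv ▸ hf.hasStrictFDerivAt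
  exact ⟨(hstrict.toOpenPartialHomeomorph f).symm,
    (hstrict.toOpenPartialHomeomorph f).analyticAt_symm'
      hstrict.mem_toOpenPartialHomeomorph_source hf hf'.fderiv,
    hstrict.eventually_right_inverse⟩

section MonicMul

variable [DecidableEq 𝕜] {k m n : ℕ}

lemma analyticCoeffAt_monicOfFn {a : E → Fin n → 𝕜} {z : E} (ha : AnalyticAt 𝕜 a z) :
    AnalyticCoeffAt 𝕜 (fun h => monicOfFn n (a h)) z := by
  intro i
  rcases lt_or_ge i n with hi | hi
  · simpa only [coeff_monicOfFn_of_lt _ ⟨i, hi⟩] using analyticAt_pi_iff.1 ha ⟨i, hi⟩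
  · simpa only [(isMonicOfDegree_monicOfFn _).coeff_eq (isMonicOfDegree_X_pow 𝕜 n) hi]
      using analyticAt_const

/-- Multiplication of monic polynomials of degrees `k` and `m`, as a map between the spaces of
their coefficients below the leading ones; factorizations are continued by inverting it locally. -/
noncomputable def monicMul (k m : ℕ) (x : (Fin k → 𝕜) × (Fin m → 𝕜)) : Fin (k + m) → 𝕜 :=
  toFn (k + m) (monicOfFn k x.1 * monicOfFn m x.2)

/-- The linear part of `monicMul` at `x`, which is its derivative there: `(a, b)` is sent to
`a * g + f * b` when `x` encodes `(f, g)`. -/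
noncomputable def monicMulLinear (x : (Fin k → 𝕜) × (Fin m → 𝕜)) :
    (Fin k → 𝕜) × (Fin m → 𝕜) →ₗ[𝕜] (Fin (k + m) → 𝕜) :=
  toFn (k + m) ∘ₗ
    (LinearMap.mulRight 𝕜 (monicOfFn m x.2) ∘ₗ ofFn k).coprod
      (LinearMap.mulLeft 𝕜 (monicOfFn k x.1) ∘ₗ ofFn m)

/-- Multiplication of polynomials of degrees less than `k` and `m`, on coefficients: the quadratic
remainder of `monicMul`. -/
noncomputable def mulFn (k m : ℕ) :
    (Fin k → 𝕜) →ₗ[𝕜] (Fin m → 𝕜) →ₗ[𝕜] (Fin (k + m) → 𝕜) :=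
  ((LinearMap.mul 𝕜 𝕜[X]).compl₁₂ (ofFn k) (ofFn m)).compr₂ (toFn (k + m))

lemma monicMulLinear_apply (x w : (Fin k → 𝕜) × (Fin m → 𝕜)) :
    monicMulLinear x w =
      toFn (k + m) (ofFn k w.1 * monicOfFn m x.2 + monicOfFn k x.1 * ofFn m w.2) := rfl

lemma mulFn_apply (a : Fin k → 𝕜) (b : Fin m → 𝕜) :
    mulFn k m a b = toFn (k + m) (ofFn k a * ofFn m b) := rfl

lemma monicMul_eq_add (x y : (Fin k → 𝕜) × (Fin m → 𝕜)) :
    monicMul k m y =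
      monicMul k m x + monicMulLinear x (y - x) + mulFn k m (y - x).1 (y - x).2 := by
  rw [monicMul, monicMul, monicMulLinear_apply, mulFn_apply, ← map_add, ← map_add]
  simp only [Prod.fst_sub, Prod.snd_sub, map_sub, monicOfFn]
  congr 1
  ring

lemma injective_monicMulLinear {x : (Fin k → 𝕜) × (Fin m → 𝕜)}
    (hx : IsCoprime (monicOfFn k x.1) (monicOfFn m x.2)) :
    Function.Injective (monicMulLinear x) := by
  rw [injective_iff_map_eq_zero]
  intro w hw
  have hzero : ofFn k w.1 * monicOfFn m x.2 + monicOfFn k x.1 * ofFn m w.2 = 0 := by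
    have hdeg : (ofFn k w.1 * monicOfFn m x.2 + monicOfFn k x.1 * ofFn m w.2).degree <
        ((k + m : ℕ) : WithBot ℕ) := by
      refine (degree_add_le _ _).trans_lt (max_lt ?_ ?_)
      · rw [degree_mul, degree_monicOfFn, Nat.cast_add]
        exact WithBot.add_lt_add_right (by simp) (ofFn_degree_lt _)
      · rw [degree_mul, degree_monicOfFn, Nat.cast_add]
        exact WithBot.add_lt_add_left (by simp) (ofFn_degree_lt _)
    ext i
    rcases lt_or_ge i (k + m) with hi | hi
    · exact congrFun hw ⟨i, hi⟩
    · exact coeff_eq_zero_of_degree_lt (hdeg.trans_le (by exact_mod_cast hi))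
  have hw₁ : ofFn k w.1 = 0 := by
    refine eq_zero_of_dvd_of_degree_lt (p := monicOfFn k x.1)
      (hx.dvd_of_dvd_mul_right ⟨-ofFn m w.2, by linear_combination hzero⟩) ?_
    rw [degree_monicOfFn]
    exact ofFn_degree_lt _
  have hw₂ : ofFn m w.2 = 0 := by
    rw [hw₁, zero_mul, zero_add] at hzero
    exact (mul_eq_zero.1 hzero).resolve_left (isMonicOfDegree_monicOfFn _).ne_zero
  exact Prod.ext (injective_ofFn k (by simpa using hw₁)) (injective_ofFn m (by simpa using hw₂))

variable [CompleteSpace 𝕜]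

lemma analyticAt_monicMul (x : (Fin k → 𝕜) × (Fin m → 𝕜)) : AnalyticAt 𝕜 (monicMul k m) x := by
  have hlin := (monicMulLinear (0 : (Fin k → 𝕜) × (Fin m → 𝕜))).toContinuousLinearMap.analyticAt x
  have hbil := (mulFn (𝕜 := 𝕜) k m).toContinuousBilinearMap.analyticAt_bilinear x
  refine ((analyticAt_const (v := monicMul k m 0)).add hlin |>.add hbil).congr
    (.of_forall fun y => ?_)
  have hy := monicMul_eq_add 0 y
  rw [sub_zero] at hy
  exact hy.symm

lemma hasFDerivAt_monicMul (x : (Fin k → 𝕜) × (Fin m → 𝕜)) :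
    HasFDerivAt (monicMul k m) (monicMulLinear x).toContinuousLinearMap x := by
  have hsub : HasFDerivAt (fun y => y - x) (ContinuousLinearMap.id 𝕜 _) x :=
    (hasFDerivAt_id x).sub_const x
  have hlin := (monicMulLinear x).toContinuousLinearMap.hasFDerivAt.comp x hsub
  have hbil := (mulFn (𝕜 := 𝕜) k m).toContinuousBilinearMap.hasFDerivAt_of_bilinear
    (hasFDerivAt_fst.comp x hsub) (hasFDerivAt_snd.comp x hsub)
  convert! (hlin.const_add (monicMul k m x)).add hbil using 1
  · funext y
    exact monicMul_eq_add x y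
  · ext <;> simp

end MonicMul

lemma AnalyticCoeffAt.exists_eventually_eq_mul [CompleteSpace 𝕜] {k m : ℕ} {p : E → 𝕜[X]}
    {z : E} {f₀ g₀ : 𝕜[X]} (hp : AnalyticCoeffAt 𝕜 p z)
    (hdeg : ∀ᶠ h in 𝓝 z, IsMonicOfDegree (p h) (k + m))
    (hf₀ : IsMonicOfDegree f₀ k) (hg₀ : IsMonicOfDegree g₀ m) (hcop : IsCoprime f₀ g₀)
    (hpz : p z = f₀ * g₀) :
    ∃ f g : E → 𝕜[X], AnalyticCoeffAt 𝕜 f z ∧ AnalyticCoeffAt 𝕜 g z ∧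
      (∀ h, IsMonicOfDegree (f h) k) ∧ (∀ h, IsMonicOfDegree (g h) m) ∧
      ∀ᶠ h in 𝓝 z, p h = f h * g h := by
  classical
  let x := (toFn k f₀, toFn m g₀)
  have hinj : Function.Injective (monicMulLinear x) := by
    apply injective_monicMulLinear
    rwa [← eq_monicOfFn_toFn hf₀, ← eq_monicOfFn_toFn hg₀]
  let L := (LinearEquiv.ofInjectiveOfFinrankEq _ hinj (by simp)).toContinuousLinearEquiv
  obtain ⟨g, hg, hgr⟩ :=
    exists_analyticAt_rightInverse (f' := L) (analyticAt_monicMul x) (hasFDerivAt_monicMul x)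
  have hxz : monicMul k m x = toFn (k + m) (p z) := by
    rw [monicMul, hpz, ← eq_monicOfFn_toFn hf₀, ← eq_monicOfFn_toFn hg₀]
  rw [hxz] at hg hgr
  have hc : AnalyticAt 𝕜 (fun h => toFn (k + m) (p h)) z := analyticAt_pi_iff.2 fun i => hp i
  have hgc : AnalyticAt 𝕜 (fun h => g (toFn (k + m) (p h))) z := hg.comp_of_eq hc rfl
  refine ⟨fun h => monicOfFn k (g (toFn (k + m) (p h))).1,
    fun h => monicOfFn m (g (toFn (k + m) (p h))).2,
    analyticCoeffAt_monicOfFn (analyticAt_fst.comp hgc),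
    analyticCoeffAt_monicOfFn (analyticAt_snd.comp hgc),
    fun _ => isMonicOfDegree_monicOfFn _, fun _ => isMonicOfDegree_monicOfFn _, ?_⟩
  filter_upwards [hc.continuousAt.eventually hgr, hdeg] with h hh hdegh
  calc p h = monicOfFn (k + m) (toFn (k + m) (p h)) := eq_monicOfFn_toFn hdegh
    _ = monicOfFn (k + m) (monicMul k m (g (toFn (k + m) (p h)))) := by rw [hh]
    _ = _ := (eq_monicOfFn_toFn
      ((isMonicOfDegree_monicOfFn _).mul (isMonicOfDegree_monicOfFn _))).symm

end Hensel

section AnalyticOrder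

lemma le_analyticOrderAt_of_isBigO {𝕜 E : Type*} [NontriviallyNormedField 𝕜]
    [NormedAddCommGroup E] [NormedSpace 𝕜 E] {f : 𝕜 → E} {z : 𝕜} {j : ℕ} (hf : AnalyticAt 𝕜 f z)
    (hO : f =O[𝓝[≠] z] fun w => (w - z) ^ j) : (j : ℕ∞) ≤ analyticOrderAt f z := by
  by_contra! hlt
  obtain ⟨q, hq⟩ := ENat.ne_top_iff_exists.1 (ne_top_of_lt hlt)
  have hqj : q < j := by exact_mod_cast hq ▸ hlt
  obtain ⟨g, hg, hgz, hfg⟩ := hf.analyticOrderAt_eq_natCast.1 hq.symm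
  have hgO : g =O[𝓝[≠] z] fun w => (w - z) ^ (j - q) := by
    refine ((Asymptotics.isBigO_refl (fun w => ((w - z) ^ q)⁻¹) (𝓝[≠] z)).smul hO).congr' ?_ ?_
    · filter_upwards [hfg.filter_mono nhdsWithin_le_nhds, self_mem_nhdsWithin] with w hw hne
      rw [hw, inv_smul_smul₀ (pow_ne_zero q (sub_ne_zero.2 hne))]
    · filter_upwards [self_mem_nhdsWithin] with w hne
      rw [smul_eq_mul, pow_sub₀ _ (sub_ne_zero.2 hne) hqj.le, mul_comm]
  have hpow : Tendsto (fun w => (w - z) ^ (j - q)) (𝓝[≠] z) (𝓝 0) := by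
    have hcont : Continuous fun w => (w - z) ^ (j - q) := by fun_prop
    simpa [(Nat.sub_pos_of_lt hqj).ne'] using (hcont.tendsto z).mono_left nhdsWithin_le_nhds
  exact hgz (tendsto_nhds_unique (hg.continuousAt.tendsto.mono_left nhdsWithin_le_nhds)
    (hgO.trans_tendsto hpow))

lemma even_of_eventually_nonneg_pow_mul {g : ℝ → ℝ} {h₀ : ℝ} {q : ℕ} (hg : ContinuousAt g h₀)
    (hg₀ : g h₀ ≠ 0) (hnonneg : ∀ᶠ h in 𝓝 h₀, 0 ≤ (h - h₀) ^ q * g h) : Even q := by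
  by_contra hq
  rw [Nat.not_even_iff_odd] at hq
  have hright : 0 ≤ g h₀ := by
    refine ge_of_tendsto (hg.tendsto.mono_left (nhdsWithin_le_nhds (s := Set.Ioi h₀))) ?_
    filter_upwards [hnonneg.filter_mono nhdsWithin_le_nhds, self_mem_nhdsWithin] with h hh hlt
    exact nonneg_of_mul_nonneg_right hh (pow_pos (sub_pos.2 hlt) q)
  have hleft : g h₀ ≤ 0 := by
    refine le_of_tendsto (hg.tendsto.mono_left (nhdsWithin_le_nhds (s := Set.Iio h₀))) ?_
    filter_upwards [hnonneg.filter_mono nhdsWithin_le_nhds, self_mem_nhdsWithin] with h hh hlt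
    exact nonpos_of_mul_nonneg_right hh (hq.pow_neg (sub_neg.2 hlt))
  exact hg₀ (le_antisymm hleft hright)

lemma exists_eq_pow_two_mul_mul_of_nonneg {f : ℝ → ℝ} {h₀ : ℝ} (hf : AnalyticAt ℝ f h₀)
    (hnonneg : ∀ᶠ h in 𝓝 h₀, 0 ≤ f h) (hne : ¬ ∀ᶠ h in 𝓝 h₀, f h = 0) :
    ∃ (m : ℕ) (g : ℝ → ℝ), AnalyticAt ℝ g h₀ ∧ g h₀ ≠ 0 ∧
      ∀ᶠ h in 𝓝 h₀, f h = (h - h₀) ^ (2 * m) * g h := by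
  obtain ⟨q, g, hg, hg₀, hfg⟩ := hf.exists_eventuallyEq_pow_smul_nonzero_iff.2 hne
  obtain ⟨m, rfl⟩ : Even q := even_of_eventually_nonneg_pow_mul hg.continuousAt hg₀ <| by
    filter_upwards [hnonneg, hfg] with h hh hfgh
    rwa [← smul_eq_mul, ← hfgh]
  exact ⟨m, g, hg, hg₀, by simpa only [two_mul, smul_eq_mul] using hfg⟩

end AnalyticOrder

section RealRooted

lemma abs_im_pow_natDegree_le_norm_aeval {p : ℝ[X]} (hp : p.Monic) (hs : p.Splits) (w : ℂ) :
    |w.im| ^ p.natDegree ≤ ‖aeval w p‖ := by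
  have haeval : aeval w p = (p.roots.map fun a : ℝ => w - a).prod := by
    conv_lhs => rw [hs.eq_prod_roots_of_monic hp]
    simp [map_multiset_prod, Multiset.map_map]
  rw [haeval, hs.natDegree_eq_card_roots]
  induction p.roots using Multiset.induction_on with
  | empty => simp
  | cons a s ih =>
    have him : |w.im| ≤ ‖w - a‖ := by simpa using Complex.abs_im_le_norm (w - a)
    rw [Multiset.card_cons, pow_succ', Multiset.map_cons, Multiset.prod_cons, norm_mul]
    gcongr

lemma splits_of_abs_im_pow_le_norm_aeval {p : ℝ[X]} {n : ℕ}
    (h : ∀ w : ℂ, |w.im| ^ n ≤ ‖aeval w p‖) : p.Splits := by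
  refine Splits.of_splits_map (algebraMap ℝ ℂ) (IsAlgClosed.splits _) fun w hw => ?_
  have hroot : aeval w p = 0 := by simpa [aeval_def] using (mem_roots'.1 hw).2
  have him : |w.im| ^ n = 0 := le_antisymm (by simpa [hroot] using h w) (by positivity)
  exact ⟨w.re, Complex.ext rfl (abs_eq_zero.1 (eq_zero_of_pow_eq_zero him)).symm⟩

lemma splits_of_tendsto {ι : Type*} {l : Filter ι} [l.NeBot] {p : ι → ℝ[X]} {q : ℝ[X]} {n : ℕ}
    (hp : ∀ᶠ i in l, IsMonicOfDegree (p i) n) (hs : ∀ᶠ i in l, (p i).Splits)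
    (hq : q.natDegree ≤ n)
    (hlim : ∀ k, Tendsto (fun i => (p i).coeff k) l (𝓝 (q.coeff k))) : q.Splits := by
  refine splits_of_abs_im_pow_le_norm_aeval (n := n) fun w => ?_
  have haeval : Tendsto (fun i => aeval w (p i)) l (𝓝 (aeval w q)) := by
    rw [aeval_eq_sum_range' (Nat.lt_succ_of_le hq)]
    refine (tendsto_finsetSum (Finset.range n.succ) fun k _ =>
      (hlim k).smul_const (w ^ k)).congr' ?_
    filter_upwards [hp] with i hi
    rw [aeval_eq_sum_range' (hi.natDegree_eq.trans_lt n.lt_succ_self)]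
  refine ge_of_tendsto haeval.norm ?_
  filter_upwards [hp, hs] with i hi hsi
  simpa only [hi.natDegree_eq] using abs_im_pow_natDegree_le_norm_aeval hi.monic hsi w

lemma esymm_one {R : Type*} [CommSemiring R] (s : Multiset R) : s.esymm 1 = s.sum := by
  simp [Multiset.esymm, Multiset.powersetCard_one, Multiset.map_map]

lemma esymm_two_cons {R : Type*} [CommSemiring R] (a : R) (s : Multiset R) :
    (a ::ₘ s).esymm 2 = s.esymm 2 + a * s.sum := by
  have hmul : (s.map (a * ·)).sum = a * s.sum := by
    simpa using Multiset.sum_map_mul_left (s := s) (a := a) (f := id)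
  simp [Multiset.esymm, Multiset.powersetCard_cons, Multiset.powersetCard_one, Multiset.map_map,
    hmul]

lemma sum_sq_eq_sub_two_mul_esymm {R : Type*} [CommRing R] (s : Multiset R) :
    (s.map (· ^ 2)).sum = s.sum ^ 2 - 2 * s.esymm 2 := by
  induction s using Multiset.induction_on with
  | empty => simp [Multiset.esymm, Multiset.powersetCard_zero_right]
  | cons a s ih =>
    rw [Multiset.map_cons, Multiset.sum_cons, Multiset.sum_cons, esymm_two_cons, ih]
    ring

lemma sum_sq_roots_eq {K : Type*} [Field K] {p : K[X]} {n : ℕ} (hp : IsMonicOfDegree p (n + 2))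
    (hs : p.Splits) :
    (p.roots.map (· ^ 2)).sum = p.coeff (n + 1) ^ 2 - 2 * p.coeff n := by
  have hcoeff (k : ℕ) (hk : k ≤ n + 2) :
      p.coeff k = (-1) ^ (n + 2 - k) * p.roots.esymm (n + 2 - k) := by
    simpa [hp.natDegree_eq, hp.leadingCoeff_eq] using
      coeff_eq_esymm_roots_of_splits hs (hk.trans hp.natDegree_eq.ge)
  rw [sum_sq_eq_sub_two_mul_esymm, hcoeff n (by omega), hcoeff (n + 1) (by omega),
    Nat.add_sub_cancel_left, show n + 2 - (n + 1) = 1 by omega, esymm_one]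
  ring

lemma sq_le_of_mem_roots {p : ℝ[X]} {n : ℕ} (hp : IsMonicOfDegree p (n + 2))
    (hs : p.Splits) (hcoeff : p.coeff (n + 1) = 0) {a : ℝ} (ha : a ∈ p.roots) :
    a ^ 2 ≤ -2 * p.coeff n := by
  have hsum := sum_sq_roots_eq hp hs
  have hle : a ^ 2 ≤ (p.roots.map (· ^ 2)).sum := by
    refine Multiset.single_le_sum (fun b hb => ?_) _ (Multiset.mem_map_of_mem (· ^ 2) ha)
    obtain ⟨c, -, rfl⟩ := Multiset.mem_map.1 hb
    exact sq_nonneg c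
  rw [hsum, hcoeff] at hle
  linarith

lemma abs_coeff_le {p : ℝ[X]} {n : ℕ} {B : ℝ} (hp : IsMonicOfDegree p (n + 2)) (hs : p.Splits)
    (hcoeff : p.coeff (n + 1) = 0) (hB : 0 ≤ B) (hle : -2 * p.coeff n ≤ B ^ 2) (k : ℕ) :
    |p.coeff k| ≤ B ^ (n + 2 - k) * (n + 2).choose k := by
  have hroots : ∀ a ∈ (p.map (RingHom.id ℝ)).roots, ‖a‖ ≤ B := by
    intro a ha
    rw [Polynomial.map_id] at ha
    exact abs_le_of_sq_le_sq ((sq_le_of_mem_roots hp hs hcoeff ha).trans hle) hB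
  simpa [hp.natDegree_eq] using coeff_le_of_roots_le k hp.monic (by simpa using hs) hroots

end RealRooted

section AnalyticRoots

variable {𝕜 E R : Type*} [NontriviallyNormedField 𝕜] [NormedAddCommGroup E] [NormedSpace 𝕜 E]
  [NormedCommRing R] [NormedAlgebra 𝕜 R] {p q : E → R[X]} {m n : ℕ} {z : E}

variable (𝕜) in
/-- Near `z` the polynomials `p h` split into `n` linear factors whose roots are analytic
functions of `h`. -/
def HasAnalyticRootsAt (p : E → R[X]) (n : ℕ) (z : E) : Prop :=
  ∃ lam : Fin n → E → R, (∀ i, AnalyticAt 𝕜 (lam i) z) ∧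
    ∀ᶠ h in 𝓝 z, p h = ∏ i, (X - C (lam i h))

lemma HasAnalyticRootsAt.congr (hp : HasAnalyticRootsAt 𝕜 p n z)
    (hpq : ∀ᶠ h in 𝓝 z, q h = p h) : HasAnalyticRootsAt 𝕜 q n z := by
  obtain ⟨lam, hlam, hprod⟩ := hp
  exact ⟨lam, hlam, by filter_upwards [hprod, hpq] with h hh hpqh using hpqh.trans hh⟩

lemma HasAnalyticRootsAt.mul (hp : HasAnalyticRootsAt 𝕜 p m z) (hq : HasAnalyticRootsAt 𝕜 q n z) :
    HasAnalyticRootsAt 𝕜 (fun h => p h * q h) (m + n) z := by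
  obtain ⟨lam, hlam, hpprod⟩ := hp
  obtain ⟨mu, hmu, hqprod⟩ := hq
  refine ⟨Fin.append lam mu, Fin.addCases (by simpa using hlam) (by simpa using hmu), ?_⟩
  filter_upwards [hpprod, hqprod] with h hph hqh
  simp only [hph, hqh, Fin.prod_univ_add, Fin.append_left, Fin.append_right]

lemma HasAnalyticRootsAt.taylor {s : E → R} (hp : HasAnalyticRootsAt 𝕜 p n z)
    (hs : AnalyticAt 𝕜 s z) : HasAnalyticRootsAt 𝕜 (fun h => taylor (s h) (p h)) n z := by
  obtain ⟨lam, hlam, hprod⟩ := hp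
  refine ⟨fun i h => lam i h - s h, fun i => (hlam i).sub hs, ?_⟩
  filter_upwards [hprod] with h hh
  simp only [hh, taylor_apply, prod_comp, sub_comp, X_comp, C_comp, C_sub]
  exact Finset.prod_congr rfl fun i _ => by ring

lemma prod_X_sub_C_scaleRoots {R ι : Type*} [CommRing R] [NoZeroDivisors R] (s : Finset ι)
    (a : ι → R) (b : R) :
    (∏ i ∈ s, (X - C (a i))).scaleRoots b = ∏ i ∈ s, (X - C (a i * b)) := by
  induction s using Finset.cons_induction with
  | empty => simp
  | cons i s hi ih =>
    rw [Finset.prod_cons, Finset.prod_cons, mul_scaleRoots_of_noZeroDivisors, X_sub_C_scaleRoots,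
      ih]

lemma HasAnalyticRootsAt.scaleRoots [NoZeroDivisors R] {b : E → R}
    (hp : HasAnalyticRootsAt 𝕜 p n z) (hb : AnalyticAt 𝕜 b z) :
    HasAnalyticRootsAt 𝕜 (fun h => (p h).scaleRoots (b h)) n z := by
  obtain ⟨lam, hlam, hprod⟩ := hp
  refine ⟨fun i h => lam i h * b h, fun i => (hlam i).mul hb, ?_⟩
  filter_upwards [hprod] with h hh
  rw [hh, prod_X_sub_C_scaleRoots]

end AnalyticRoots

section Centering

lemma isMonicOfDegree_taylor {R : Type*} [CommRing R] {p : R[X]} {n : ℕ}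
    (hp : IsMonicOfDegree p n) (s : R) : IsMonicOfDegree (taylor s p) n :=
  ⟨(natDegree_taylor p s).trans hp.natDegree_eq, by
    rw [Monic, leadingCoeff_taylor, hp.leadingCoeff_eq]⟩

lemma coeff_taylor_of_isMonicOfDegree_succ {R : Type*} [CommRing R] {p : R[X]} {n : ℕ}
    (hp : IsMonicOfDegree p (n + 1)) (s : R) :
    (taylor s p).coeff n = p.coeff n + (n + 1) * s := by
  have hdeg : (hasseDeriv n p).natDegree < 2 := by
    have := natDegree_hasseDeriv_le p n
    have := hp.natDegree_eq
    omega
  have hlead : p.coeff (n + 1) = 1 := by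
    rw [← hp.natDegree_eq]
    exact hp.monic
  simp [taylor_coeff, eval_eq_sum_range' hdeg, Finset.sum_range_succ, hasseDeriv_coeff, hlead,
    add_comm 1 n]

lemma eq_X_pow_of_splits {p : ℝ[X]} {n : ℕ} (hp : IsMonicOfDegree p (n + 2)) (hs : p.Splits)
    (hcoeff₁ : p.coeff (n + 1) = 0) (hcoeff₂ : p.coeff n = 0) : p = X ^ (n + 2) := by
  ext k
  rcases lt_or_ge k (n + 2) with hk | hk
  · have hle := abs_coeff_le hp hs hcoeff₁ le_rfl (by simp [hcoeff₂]) k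
    rw [zero_pow (by omega), zero_mul] at hle
    rw [abs_nonpos_iff.1 hle, coeff_X_pow, if_neg hk.ne]
  · exact hp.coeff_eq (isMonicOfDegree_X_pow ℝ (n + 2)) hk

lemma coeff_X_sub_C_pow_eq_zero {K : Type*} [Field K] [CharZero K] {a : K} {n : ℕ}
    (hcoeff : ((X - C a) ^ (n + 2)).coeff (n + 1) = 0) : ((X - C a) ^ (n + 2)).coeff n = 0 := by
  have ha : a = 0 := by
    have hn : (n : K) + 1 + 1 ≠ 0 := by exact_mod_cast (n + 1).succ_ne_zero
    rw [sub_eq_add_neg, ← C_neg, coeff_X_add_C_pow] at hcoeff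
    simpa [hn] using hcoeff
  simp [ha, coeff_X_pow]

lemma exists_isCoprime_mul_of_splits {K : Type*} [Field K] [CharZero K] {p : K[X]} {n : ℕ}
    (hp : IsMonicOfDegree p (n + 2)) (hs : p.Splits) (hcoeff₁ : p.coeff (n + 1) = 0)
    (hcoeff₂ : p.coeff n ≠ 0) :
    ∃ (k m : ℕ) (f g : K[X]), k + m = n + 2 ∧ k < n + 2 ∧ m < n + 2 ∧ IsMonicOfDegree f k ∧
      IsMonicOfDegree g m ∧ IsCoprime f g ∧ p = f * g := by
  have hdeg : p.degree ≠ 0 := by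
    rw [degree_eq_natDegree hp.ne_zero, hp.natDegree_eq]
    exact_mod_cast (n + 1).succ_ne_zero
  obtain ⟨a, ha⟩ := hs.exists_eval_eq_zero hdeg
  obtain ⟨g, hpg, hndvd⟩ := exists_eq_pow_rootMultiplicity_mul_and_not_dvd p hp.ne_zero a
  set r := p.rootMultiplicity a
  have hr : 0 < r := (rootMultiplicity_pos hp.ne_zero).2 ha
  have hf : IsMonicOfDegree ((X - C a) ^ r) r := by
    simpa using (isMonicOfDegree_X_sub_one a).pow r
  have hrle : r ≤ n + 2 := by
    rw [← hf.natDegree_eq, ← hp.natDegree_eq]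
    exact natDegree_le_of_dvd ⟨g, hpg⟩ hp.ne_zero
  have hg : IsMonicOfDegree g (n + 2 - r) :=
    hf.of_mul_left (by rwa [← hpg, Nat.add_sub_cancel' hrle])
  have hrne : r ≠ n + 2 := by
    intro hrn
    rw [hrn, Nat.sub_self, isMonicOfDegree_zero_iff] at hg
    rw [hg, mul_one, hrn] at hpg
    rw [hpg] at hcoeff₁ hcoeff₂
    exact hcoeff₂ (coeff_X_sub_C_pow_eq_zero hcoeff₁)
  have hcop : IsCoprime ((X - C a) ^ r) g :=
    ((irreducible_X_sub_C a).coprime_iff_not_dvd.2 hndvd).pow_left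
  exact ⟨r, n + 2 - r, _, g, by omega, by omega, by omega, hf, hg, hcop, hpg⟩

end Centering

section ScaleRoots

lemma splits_of_splits_scaleRoots {K : Type*} [Field K] {p : K[X]} {b : K} (hb : b ≠ 0)
    (hs : (p.scaleRoots b).Splits) : p.Splits := by
  simpa [← scaleRoots_mul, mul_inv_cancel₀ hb] using hs.scaleRoots b⁻¹

lemma AnalyticCoeffAt.exists_eventually_eq_scaleRoots {𝕜 : Type*} [NontriviallyNormedField 𝕜]
    {p : 𝕜 → 𝕜[X]} {h₀ : 𝕜} {m n : ℕ} (hp : AnalyticCoeffAt 𝕜 p h₀)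
    (hdeg : ∀ᶠ h in 𝓝 h₀, IsMonicOfDegree (p h) n)
    (hO : ∀ k, (fun h => (p h).coeff k) =O[𝓝 h₀] fun h => (h - h₀) ^ (m * (n - k))) :
    ∃ u : 𝕜 → 𝕜[X], AnalyticCoeffAt 𝕜 u h₀ ∧ (∀ h, IsMonicOfDegree (u h) n) ∧
      ∀ᶠ h in 𝓝 h₀, p h = (u h).scaleRoots ((h - h₀) ^ m) := by
  classical
  have hfactor (k : ℕ) : ∃ c : 𝕜 → 𝕜, AnalyticAt 𝕜 c h₀ ∧
      ∀ᶠ h in 𝓝 h₀, (p h).coeff k = (h - h₀) ^ (m * (n - k)) * c h :=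
    (natCast_le_analyticOrderAt (hp k)).1
      (le_analyticOrderAt_of_isBigO (hp k) ((hO k).mono nhdsWithin_le_nhds))
  choose c hc hpc using hfactor
  refine ⟨fun h => monicOfFn n fun i => c i h,
    analyticCoeffAt_monicOfFn (analyticAt_pi_iff.2 fun i => hc i),
    fun h => isMonicOfDegree_monicOfFn _, ?_⟩
  filter_upwards [hdeg, eventually_all.2 fun i : Fin n => hpc i] with h hdegh hpch
  have hu := isMonicOfDegree_monicOfFn fun i : Fin n => c i h
  have hscale :
      IsMonicOfDegree ((monicOfFn n fun i : Fin n => c i h).scaleRoots ((h - h₀) ^ m)) n :=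
    ⟨by rw [natDegree_scaleRoots, hu.natDegree_eq], (monic_scaleRoots_iff _).2 hu.monic⟩
  ext k
  rcases lt_or_ge k n with hk | hk
  · rw [coeff_scaleRoots, hu.natDegree_eq, coeff_monicOfFn_of_lt _ ⟨k, hk⟩, hpch ⟨k, hk⟩,
      ← pow_mul, mul_comm]
  · exact hdegh.coeff_eq hscale hk

end ScaleRoots

section Hyperbolic

/-- An analytic family of real-rooted monic polynomials of degree `n` near `h₀` (such
polynomials in one variable are called hyperbolic). -/
structure IsHyperbolicAt (p : ℝ → ℝ[X]) (n : ℕ) (h₀ : ℝ) : Prop where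
  analytic : AnalyticCoeffAt ℝ p h₀
  isMonicOfDegree : ∀ᶠ h in 𝓝 h₀, IsMonicOfDegree (p h) n
  splits : ∀ᶠ h in 𝓝 h₀, (p h).Splits

namespace IsHyperbolicAt

variable {p : ℝ → ℝ[X]} {h₀ : ℝ} {n : ℕ}

lemma taylor {s : ℝ → ℝ} (hp : IsHyperbolicAt p n h₀) (hs : AnalyticAt ℝ s h₀) :
    IsHyperbolicAt (fun h => taylor (s h) (p h)) n h₀ where
  analytic := hp.analytic.taylor (hp.isMonicOfDegree.mono fun _ hh => hh.natDegree_eq.le) hs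
  isMonicOfDegree := hp.isMonicOfDegree.mono fun h hh => isMonicOfDegree_taylor hh (s h)
  splits := hp.splits.mono fun h hh => hh.taylor (s h)

lemma exists_eventually_eq_mul {k m : ℕ} {f₀ g₀ : ℝ[X]} (hp : IsHyperbolicAt p (k + m) h₀)
    (hf₀ : IsMonicOfDegree f₀ k) (hg₀ : IsMonicOfDegree g₀ m) (hcop : IsCoprime f₀ g₀)
    (hpz : p h₀ = f₀ * g₀) :
    ∃ f g : ℝ → ℝ[X], IsHyperbolicAt f k h₀ ∧ IsHyperbolicAt g m h₀ ∧
      ∀ᶠ h in 𝓝 h₀, p h = f h * g h := by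
  obtain ⟨f, g, hf, hg, hfdeg, hgdeg, hfg⟩ :=
    hp.analytic.exists_eventually_eq_mul hp.isMonicOfDegree hf₀ hg₀ hcop hpz
  have hsplits : ∀ᶠ h in 𝓝 h₀, (f h).Splits ∧ (g h).Splits := by
    filter_upwards [hp.splits, hp.isMonicOfDegree, hfg] with h hs hdeg hh
    exact ⟨hs.of_dvd hdeg.ne_zero ⟨_, hh⟩, hs.of_dvd hdeg.ne_zero ⟨_, hh.trans (mul_comm _ _)⟩⟩
  exact ⟨f, g, ⟨hf, .of_forall hfdeg, hsplits.mono fun _ => And.left⟩,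
    ⟨hg, .of_forall hgdeg, hsplits.mono fun _ => And.right⟩, hfg⟩

lemma exists_coeff_eq_pow_two_mul_mul (hp : IsHyperbolicAt p (n + 2) h₀)
    (hcoeff : ∀ᶠ h in 𝓝 h₀, (p h).coeff (n + 1) = 0)
    (hne : ¬ ∀ᶠ h in 𝓝 h₀, (p h).coeff n = 0) :
    ∃ (m : ℕ) (g : ℝ → ℝ), AnalyticAt ℝ g h₀ ∧ g h₀ ≠ 0 ∧
      ∀ᶠ h in 𝓝 h₀, (p h).coeff n = (h - h₀) ^ (2 * m) * g h := by
  have hnonneg : ∀ᶠ h in 𝓝 h₀, 0 ≤ -(p h).coeff n := by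
    filter_upwards [hp.isMonicOfDegree, hp.splits, hcoeff] with h hdeg hs hc
    have hsum : 0 ≤ ((p h).roots.map (· ^ 2)).sum :=
      Multiset.sum_nonneg fun b hb => by
        obtain ⟨a, -, rfl⟩ := Multiset.mem_map.1 hb
        exact sq_nonneg a
    rw [sum_sq_roots_eq hdeg hs, hc] at hsum
    linarith
  obtain ⟨m, g, hg, hg₀, hfg⟩ := exists_eq_pow_two_mul_mul_of_nonneg (hp.analytic n).neg hnonneg
    (by simpa using hne)
  refine ⟨m, -g, hg.neg, neg_ne_zero.2 hg₀, hfg.mono fun h hh => ?_⟩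
  rw [Pi.neg_apply, mul_neg, ← hh, Pi.neg_apply, neg_neg]

lemma coeff_isBigO_of_coeff_isBigO {m : ℕ} (hp : IsHyperbolicAt p (n + 2) h₀)
    (hcoeff : ∀ᶠ h in 𝓝 h₀, (p h).coeff (n + 1) = 0)
    (hO : (fun h => (p h).coeff n) =O[𝓝 h₀] fun h => (h - h₀) ^ (2 * m)) (k : ℕ) :
    (fun h => (p h).coeff k) =O[𝓝 h₀] fun h => (h - h₀) ^ (m * (n + 2 - k)) := by
  obtain ⟨c, hc, hbound⟩ := hO.exists_nonneg
  refine .of_bound (√(2 * c) ^ (n + 2 - k) * (n + 2).choose k) ?_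
  filter_upwards [hp.isMonicOfDegree, hp.splits, hcoeff, hbound.bound] with h hdeg hs hch hb
  have hsq : -2 * (p h).coeff n ≤ (√(2 * c) * |h - h₀| ^ m) ^ 2 := by
    rw [mul_pow, Real.sq_sqrt (by positivity), ← pow_mul, mul_comm m]
    rw [norm_pow, Real.norm_eq_abs, Real.norm_eq_abs] at hb
    linarith [neg_abs_le ((p h).coeff n)]
  calc ‖(p h).coeff k‖
      ≤ (√(2 * c) * |h - h₀| ^ m) ^ (n + 2 - k) * (n + 2).choose k :=
        abs_coeff_le hdeg hs hch (by positivity) hsq k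
    _ = √(2 * c) ^ (n + 2 - k) * (n + 2).choose k * ‖(h - h₀) ^ (m * (n + 2 - k))‖ := by
        rw [norm_pow, Real.norm_eq_abs, mul_pow, pow_mul]
        ring

lemma of_nhdsNE (han : AnalyticCoeffAt ℝ p h₀) (hdeg : ∀ h, IsMonicOfDegree (p h) n)
    (hs : ∀ᶠ h in 𝓝[≠] h₀, (p h).Splits) : IsHyperbolicAt p n h₀ where
  analytic := han
  isMonicOfDegree := .of_forall hdeg
  splits := by
    have hs₀ : (p h₀).Splits :=
      splits_of_tendsto (.of_forall hdeg) hs (hdeg h₀).natDegree_eq.le fun k =>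
        (han k).continuousAt.tendsto.mono_left nhdsWithin_le_nhds
    exact eventually_nhdsWithin_iff.1 hs |>.mono fun h hh => by
      rcases eq_or_ne h h₀ with rfl | hne
      exacts [hs₀, hh hne]

lemma exists_eventually_eq_scaleRoots {m : ℕ} (hp : IsHyperbolicAt p n h₀)
    (hO : ∀ k, (fun h => (p h).coeff k) =O[𝓝 h₀] fun h => (h - h₀) ^ (m * (n - k))) :
    ∃ u : ℝ → ℝ[X], IsHyperbolicAt u n h₀ ∧
      ∀ᶠ h in 𝓝 h₀, p h = (u h).scaleRoots ((h - h₀) ^ m) := by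
  obtain ⟨u, hu, hudeg, hpu⟩ := hp.analytic.exists_eventually_eq_scaleRoots hp.isMonicOfDegree hO
  refine ⟨u, of_nhdsNE hu hudeg ?_, hpu⟩
  filter_upwards [hp.splits.filter_mono nhdsWithin_le_nhds, hpu.filter_mono nhdsWithin_le_nhds,
    self_mem_nhdsWithin] with h hs hpuh hne
  exact splits_of_splits_scaleRoots (pow_ne_zero m (sub_ne_zero.2 hne)) (hpuh ▸ hs)

lemma exists_eventually_eq_scaleRoots_coeff_ne_zero (hp : IsHyperbolicAt p (n + 2) h₀)
    (hcoeff : ∀ᶠ h in 𝓝 h₀, (p h).coeff (n + 1) = 0)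
    (hne : ¬ ∀ᶠ h in 𝓝 h₀, (p h).coeff n = 0) :
    ∃ (m : ℕ) (u : ℝ → ℝ[X]), IsHyperbolicAt u (n + 2) h₀ ∧ (u h₀).coeff (n + 1) = 0 ∧
      (u h₀).coeff n ≠ 0 ∧ ∀ᶠ h in 𝓝 h₀, p h = (u h).scaleRoots ((h - h₀) ^ m) := by
  obtain ⟨m, g, hg, hg₀, hpg⟩ := hp.exists_coeff_eq_pow_two_mul_mul hcoeff hne
  have hO : (fun h => (p h).coeff n) =O[𝓝 h₀] fun h => (h - h₀) ^ (2 * m) := by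
    have hmul := (Asymptotics.isBigO_refl (fun h => (h - h₀) ^ (2 * m)) (𝓝 h₀)).mul
      (hg.continuousAt.tendsto.isBigO_one ℝ)
    simpa only [mul_one] using hmul.congr' (hpg.mono fun _ hh => hh.symm) .rfl
  obtain ⟨u, hu, hpu⟩ := hp.exists_eventually_eq_scaleRoots
    (hp.coeff_isBigO_of_coeff_isBigO hcoeff hO)
  have hcoeffu (k : ℕ) {c : ℝ → ℝ} (hc : AnalyticAt ℝ c h₀)
      (hpc : ∀ᶠ h in 𝓝 h₀, (p h).coeff k = (h - h₀) ^ (m * (n + 2 - k)) * c h) :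
      (u h₀).coeff k = c h₀ := by
    refine ((ContinuousAt.eventuallyEq_nhds_iff_eventuallyEq_nhdsNE
      (hu.analytic k).continuousAt hc.continuousAt).1 ?_).eq_of_nhds
    filter_upwards [(hpu.and (hu.isMonicOfDegree.and hpc)).filter_mono nhdsWithin_le_nhds,
      self_mem_nhdsWithin] with h ⟨hpuh, hdeg, hpch⟩ hh
    rw [hpuh, coeff_scaleRoots, hdeg.natDegree_eq, ← pow_mul, mul_comm] at hpch
    exact mul_left_cancel₀ (pow_ne_zero _ (sub_ne_zero.2 hh)) hpch
  refine ⟨m, u, hu, ?_, ?_, hpu⟩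
  · exact hcoeffu (n + 1) analyticAt_const (hcoeff.mono fun h hh => by rw [hh, mul_zero])
  · rw [hcoeffu n hg (by simpa [mul_comm m] using hpg)]
    exact hg₀

lemma exists_eventually_eq_mul_scaleRoots (hp : IsHyperbolicAt p (n + 2) h₀)
    (hcoeff : ∀ᶠ h in 𝓝 h₀, (p h).coeff (n + 1) = 0)
    (hne : ¬ ∀ᶠ h in 𝓝 h₀, (p h).coeff n = 0) :
    ∃ (m k l : ℕ) (f g : ℝ → ℝ[X]), k + l = n + 2 ∧ k < n + 2 ∧ l < n + 2 ∧
      IsHyperbolicAt f k h₀ ∧ IsHyperbolicAt g l h₀ ∧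
      ∀ᶠ h in 𝓝 h₀, p h = (f h * g h).scaleRoots ((h - h₀) ^ m) := by
  obtain ⟨m, u, hu, hu₁, hu₂, hpu⟩ := hp.exists_eventually_eq_scaleRoots_coeff_ne_zero hcoeff hne
  obtain ⟨k, l, f₀, g₀, hkl, hk, hl, hf₀, hg₀, hcop, hfg₀⟩ :=
    exists_isCoprime_mul_of_splits hu.isMonicOfDegree.self_of_nhds hu.splits.self_of_nhds hu₁ hu₂
  rw [← hkl] at hu
  obtain ⟨f, g, hf, hg, hfg⟩ := hu.exists_eventually_eq_mul hf₀ hg₀ hcop hfg₀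
  refine ⟨m, k, l, f, g, hkl, hk, hl, hf, hg, ?_⟩
  filter_upwards [hpu, hfg] with h hpuh hfgh
  rw [hpuh, hfgh]

lemma hasAnalyticRootsAt_of_coeff_eq_zero (hp : IsHyperbolicAt p (n + 2) h₀)
    (hcoeff₁ : ∀ᶠ h in 𝓝 h₀, (p h).coeff (n + 1) = 0)
    (hcoeff₂ : ∀ᶠ h in 𝓝 h₀, (p h).coeff n = 0) : HasAnalyticRootsAt ℝ p (n + 2) h₀ := by
  refine ⟨fun _ _ => 0, fun _ => analyticAt_const, ?_⟩
  filter_upwards [hp.isMonicOfDegree, hp.splits, hcoeff₁, hcoeff₂] with h hdeg hs hc₁ hc₂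
  simp [eq_X_pow_of_splits hdeg hs hc₁ hc₂]

theorem hasAnalyticRootsAt (hp : IsHyperbolicAt p n h₀) : HasAnalyticRootsAt ℝ p n h₀ := by
  induction n using Nat.strong_induction_on generalizing p with
  | _ n ih =>
  match n with
  | 0 => exact ⟨0, nofun, by simpa using hp.isMonicOfDegree⟩
  | 1 =>
    refine ⟨fun _ h => -(p h).coeff 0, fun _ => (hp.analytic 0).neg, ?_⟩
    filter_upwards [hp.isMonicOfDegree] with h hh
    obtain ⟨a, ha⟩ := isMonicOfDegree_one_iff.1 hh
    simp [ha]
  | n + 2 =>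
    let s : ℝ → ℝ := fun h => -(p h).coeff (n + 1) / (n + 2)
    have hs : AnalyticAt ℝ s h₀ := (hp.analytic (n + 1)).neg.div_const
    have hcoeff : ∀ᶠ h in 𝓝 h₀, (Polynomial.taylor (s h) (p h)).coeff (n + 1) = 0 := by
      filter_upwards [hp.isMonicOfDegree] with h hh
      rw [coeff_taylor_of_isMonicOfDegree_succ hh]
      simp only [s, Nat.cast_add, Nat.cast_one]
      field
    suffices hcentered :
        HasAnalyticRootsAt ℝ (fun h => Polynomial.taylor (s h) (p h)) (n + 2) h₀ from
      (hcentered.taylor hs.neg).congr (.of_forall fun h => by simp [taylor_taylor])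
    by_cases hzero : ∀ᶠ h in 𝓝 h₀, (Polynomial.taylor (s h) (p h)).coeff n = 0
    · exact (hp.taylor hs).hasAnalyticRootsAt_of_coeff_eq_zero hcoeff hzero
    · obtain ⟨m, k, l, f, g, hkl, hk, hl, hf, hg, hfg⟩ :=
        (hp.taylor hs).exists_eventually_eq_mul_scaleRoots hcoeff hzero
      have hroots := ((ih k hk hf).mul (ih l hl hg)).scaleRoots
        (b := fun h => (h - h₀) ^ m) (by fun_prop)
      exact hkl ▸ hroots.congr hfg

end IsHyperbolicAt

end Hyperbolic

section Hermitian

variable {𝕂 ι : Type*} [RCLike 𝕂] [Fintype ι] [DecidableEq ι]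

lemma exists_splits_map_eq_charpoly {A : Matrix ι ι 𝕂} (hA : A.IsHermitian) :
    ∃ p : ℝ[X], IsMonicOfDegree p (Fintype.card ι) ∧ p.Splits ∧
      p.map (algebraMap ℝ 𝕂) = A.charpoly := by
  have hmap : (∏ i, (X - C (hA.eigenvalues i))).map (algebraMap ℝ 𝕂) = A.charpoly := by
    simp [hA.charpoly_eq, Polynomial.map_prod]
  refine ⟨_, ⟨?_, monic_prod_X_sub_C _ _⟩, .prod fun i _ => .X_sub_C _, hmap⟩
  simp

lemma exists_isHyperbolicAt_map_eq_charpoly {A : ℝ → Matrix ι ι 𝕂} {h₀ : ℝ}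
    (hA : ∀ i j, AnalyticAt ℝ (fun h => A h i j) h₀)
    (hherm : ∀ᶠ h in 𝓝 h₀, (A h).IsHermitian) :
    ∃ p : ℝ → ℝ[X], IsHyperbolicAt p (Fintype.card ι) h₀ ∧
      ∀ᶠ h in 𝓝 h₀, (p h).map (algebraMap ℝ 𝕂) = (A h).charpoly := by
  obtain ⟨p, hp⟩ := (hherm.mono fun _ => exists_splits_map_eq_charpoly).choice
  have hmap : ∀ᶠ h in 𝓝 h₀, (p h).map (algebraMap ℝ 𝕂) = (A h).charpoly :=
    hp.mono fun _ hh => hh.2.2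
  have hanalytic : AnalyticCoeffAt ℝ p h₀ := fun k =>
    ((RCLike.reCLM (K := 𝕂)).analyticAt _ |>.comp (AnalyticCoeffAt.charpoly hA k)).congr <|
      hmap.mono fun h hh => by simp [← hh]
  exact ⟨p, ⟨hanalytic, hp.mono fun _ hh => hh.1, hp.mono fun _ hh => hh.2.1⟩, hmap⟩

end Hermitian

end Rellich

theorem hermitian_analytic_eigenvalues_general {𝕂 ι : Type*} [RCLike 𝕂] [Fintype ι]
    [DecidableEq ι] {A : ℝ → Matrix ι ι 𝕂} {h₀ : ℝ}
    (hA : ∀ i j, AnalyticAt ℝ (fun h => A h i j) h₀)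
    (hherm : ∀ᶠ h in 𝓝 h₀, (A h).IsHermitian) :
    ∃ ε > (0 : ℝ), ∃ lam : ι → ℝ → ℝ,
      (∀ i, ∀ h ∈ Set.Ioo (h₀ - ε) (h₀ + ε), AnalyticAt ℝ (lam i) h) ∧
      ∀ h ∈ Set.Ioo (h₀ - ε) (h₀ + ε),
        (A h).charpoly = ∏ i, (X - C ((lam i h : ℝ) : 𝕂)) := by
  obtain ⟨p, hp, hmap⟩ := Rellich.exists_isHyperbolicAt_map_eq_charpoly hA hherm
  obtain ⟨lam, hlam, hprod⟩ := hp.hasAnalyticRootsAt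
  have hlam_nhds : ∀ᶠ h in 𝓝 h₀, ∀ i, AnalyticAt ℝ (lam i) h :=
    eventually_all.2 fun i => (hlam i).eventually_analyticAt
  obtain ⟨ε, hε, hball⟩ := Metric.eventually_nhds_iff_ball.1 (hlam_nhds.and (hmap.and hprod))
  rw [Real.ball_eq_Ioo] at hball
  let e := Fintype.equivFin ι
  refine ⟨ε, hε, fun i => lam (e i), fun i h hh => (hball h hh).1 (e i), fun h hh => ?_⟩
  obtain ⟨-, hmaph, hprodh⟩ := hball h hh
  rw [← hmaph, hprodh, ← e.prod_comp, Polynomial.map_prod]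
  simp

/-- Let `A` be a matrix-valued function of a real parameter `h`, analytic in `h` and
hermitian for all real `h`. Then locally the eigenvalues of `A(h)` can be chosen to be
real-analytic functions of `h` (giving the characteristic polynomial with
multiplicity). -/
theorem hermitian_analytic_eigenvalues (N : ℕ) (A : ℝ → Matrix (Fin N) (Fin N) ℂ)
    (hA : ∀ i j : Fin N, ∀ x : ℝ, AnalyticAt ℝ (fun h => A h i j) x)
    (hherm : ∀ h : ℝ, (A h).IsHermitian) (h₀ : ℝ) :
    ∃ ε > (0:ℝ), ∃ lam : Fin N → ℝ → ℝ,
      (∀ i : Fin N, ∀ h ∈ Set.Ioo (h₀ - ε) (h₀ + ε), AnalyticAt ℝ (lam i) h) ∧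
      ∀ h ∈ Set.Ioo (h₀ - ε) (h₀ + ε),
        (A h).charpoly = ∏ i : Fin N, (Polynomial.X - Polynomial.C ((lam i h : ℝ) : ℂ)) :=
  hermitian_analytic_eigenvalues_general (fun i j => hA i j h₀) (.of_forall hherm)
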